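/- Consider for n = 3 the spiral vertices V_i = (r p^i cos(i φ), r p^i sin(i φ), −r p^i q) with r > 0, 0 < p < 1, q ≠ 0, c = cos φ, s = sin φ. Let ε be a plane orthogonal to the z-axis intersecting segment V_3V_4, cutting the six segments V_3V_4, V_1V_4, V_4V_2, V_2V_5, V_5V_3, V_3V_6 in points E_1,…,E_6 (parametrized by α ∈ [0,1] on V_3V_4 with cut height h = −r p³ q (α p − α + 1)). Then the area A of the hexagon E_1…E_6 satisfies A/h² = s(c − 1)(2cp − p² − 1) / ((p² + p + 1) q²), independently of α. -/

import Mathlib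

/-!
Central projection from the apex onto a fixed horizontal plane sends the vertex `V i` to the point
of argument `i φ` on a circle, and the plane section at height `h` to a hexagon with vertices on
chords of that circle, scaled by a factor proportional to `h`. Along each projected edge the
reciprocal of the height is an affine function of position, so the vertices of the projected hexagon
move affinely with `1 / h`. Since the determinant of two projected vertices depends only on the
difference of their indices, and the reciprocal heights of the vertices form a geometric
progression, the position of the cut cancels in the shoelace sum.
-/

open Real

/-- 2×2 determinant of two planar points. -/
def det2 (u v : ℝ × ℝ) : ℝ := u.1 * v.2 - u.2 * v.1

/-- The pairs of vertex indices whose connecting segments are cut by the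
cross-sectional plane, in cyclic order (case n = 3). -/
def cutPairs : Fin 6 → ℕ × ℕ := ![(3, 4), (1, 4), (4, 2), (2, 5), (5, 3), (3, 6)]

open AffineMap (lineMap lineMap_apply_module)

section Projection

variable {K M : Type*} [Field K] [AddCommGroup M] [Module K M]

lemma lineMap_smul_smul {x y t : K} (u v : M) (h : lineMap x y t ≠ 0) :
    lineMap (x • u) (y • v) t =
      lineMap x y t • (lineMap u v (t * y / lineMap x y t) : M) := by
  have hu : lineMap x y t * (1 - t * y / lineMap x y t) = (1 - t) * x := by
    rw [mul_sub, mul_div_cancel₀ _ h, lineMap_apply_module, smul_eq_mul, smul_eq_mul]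
    ring
  rw [lineMap_apply_module (x • u), lineMap_apply_module u, smul_add, smul_smul, smul_smul,
    smul_smul, smul_smul, hu, mul_div_cancel₀ _ h]

lemma lineMap_inv_inv {x y t : K} (hx : x ≠ 0) (hy : y ≠ 0) (h : lineMap x y t ≠ 0) :
    lineMap x⁻¹ y⁻¹ (t * y / lineMap x y t) = (lineMap x y t)⁻¹ := by
  have hone := lineMap_smul_smul x⁻¹ y⁻¹ h
  simp only [smul_eq_mul, mul_inv_cancel₀ hx, mul_inv_cancel₀ hy, AffineMap.lineMap_same,
    AffineMap.const_apply] at hone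
  exact eq_inv_of_mul_eq_one_right hone.symm

lemma eq_sub_div_sub_of_lineMap_eq {x y t z : K} (hxy : x ≠ y) (h : lineMap x y t = z) :
    t = (z - x) / (y - x) := by
  rw [eq_div_iff (sub_ne_zero.mpr hxy.symm), ← h, AffineMap.lineMap_apply_ring']
  ring

end Projection

lemma det2_smul_smul (x : ℝ) (u v : ℝ × ℝ) : det2 (x • u) (x • v) = x ^ 2 * det2 u v := by
  simp only [det2, Prod.smul_fst, Prod.smul_snd, smul_eq_mul]
  ring

lemma det2_self (u : ℝ × ℝ) : det2 u u = 0 := by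
  rw [det2, mul_comm, sub_self]

lemma det2_swap (u v : ℝ × ℝ) : det2 v u = -det2 u v := by
  simp only [det2]
  ring

lemma det2_lineMap_lineMap (a b c d : ℝ × ℝ) (s t : ℝ) :
    det2 (lineMap a b s) (lineMap c d t) =
      (1 - s) * ((1 - t) * det2 a c + t * det2 a d) + s * ((1 - t) * det2 b c + t * det2 b d) := by
  simp only [det2, lineMap_apply_module, Prod.fst_add, Prod.snd_add, Prod.smul_fst, Prod.smul_snd,
    smul_eq_mul]
  ring

lemma det2_polar (a b x y : ℝ) :
    det2 (a * cos x, a * sin x) (b * cos y, b * sin y) = a * b * sin (y - x) := by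
  simp only [det2, sin_sub]
  ring

/-- Twice the signed area of the closed polygon with vertices `P 0, …, P (n - 1)` in cyclic order;
the index `j + 1` wraps around in `Fin n`. -/
def shoelace {n : ℕ} [NeZero n] (P : Fin n → ℝ × ℝ) : ℝ := ∑ j, det2 (P j) (P (j + 1))

lemma shoelace_smul {n : ℕ} [NeZero n] (x : ℝ) (P : Fin n → ℝ × ℝ) :
    shoelace (x • P) = x ^ 2 * shoelace P := by
  simp only [shoelace, Pi.smul_apply, det2_smul_smul, Finset.mul_sum]

/-- The hexagon whose `j`-th vertex has affine parameter `μ j` on the line from `u a` to `u b`,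
where `(a, b) = cutPairs j`. It encodes both the plane section and its central projection. -/
def cutHexagon (u : ℕ → ℝ × ℝ) (μ : Fin 6 → ℝ) (j : Fin 6) : ℝ × ℝ :=
  lineMap (u (cutPairs j).1) (u (cutPairs j).2) (μ j)

lemma shoelace_cutHexagon {u : ℕ → ℝ × ℝ} {μ : Fin 6 → ℝ}
    (hu : ∀ i j, det2 (u (i + 1)) (u (j + 1)) = det2 (u i) (u j)) :
    shoelace (cutHexagon u μ) =
      ((1 - μ 0) * μ 1 + (1 - μ 1) * μ 2 + (1 - μ 2) * μ 3 + (1 - μ 3) * μ 4 + (1 - μ 4) * μ 5 +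
        (1 - μ 5) * μ 0) * det2 (u 0) (u 1) -
      ((1 - μ 0) * (1 - μ 1) + μ 1 * μ 2 + (1 - μ 2) * (1 - μ 3) + μ 3 * μ 4 +
        (1 - μ 4) * (1 - μ 5) + μ 5 * μ 0) * det2 (u 0) (u 2) +
      ((1 - μ 1) * (1 - μ 2) + μ 2 * μ 3 + (1 - μ 3) * (1 - μ 4) + μ 4 * μ 5 -
        μ 0 * (1 - μ 1) - μ 5 * (1 - μ 0)) * det2 (u 0) (u 3) := by
  simp only [shoelace, cutHexagon, Fin.sum_univ_six, cutPairs, det2_lineMap_lineMap,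
    Fin.reduceAdd, Matrix.cons_val, det2_self, hu, det2_swap (u 0) (u 2), det2_swap (u 0) (u 3)]
  ring

lemma sq_add_self_add_one_pos (x : ℝ) : 0 < x ^ 2 + x + 1 := by
  nlinarith [sq_nonneg (x + 1 / 2)]

lemma cutPairs_fst_ne_snd (j : Fin 6) : (cutPairs j).1 ≠ (cutPairs j).2 := by
  decide +revert

lemma pow_ne_pow_of_abs_ne_one {R : Type*} [Ring R] [LinearOrder R] [IsStrictOrderedRing R]
    {m : R} (hm0 : m ≠ 0) (hm1 : |m| ≠ 1) {a b : ℕ} (hab : a ≠ b) : m ^ a ≠ m ^ b := fun h ↦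
  hab (pow_right_injective₀ (abs_pos.mpr hm0) hm1 (by simpa only [abs_pow] using congrArg abs h))

lemma shoelace_cutHexagon_of_geometric {u : ℕ → ℝ × ℝ} {μ : Fin 6 → ℝ} {m y : ℝ}
    (hu : ∀ i j, det2 (u (i + 1)) (u (j + 1)) = det2 (u i) (u j))
    (hm0 : m ≠ 0) (hm1 : |m| ≠ 1)
    (hμ : ∀ j, lineMap (m ^ (cutPairs j).1) (m ^ (cutPairs j).2) (μ j) = y) :
    shoelace (cutHexagon u μ) =
      ((2 * m ^ 2 + m + 2) * det2 (u 0) (u 1) - (m + 1) ^ 2 * det2 (u 0) (u 2) +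
        m * det2 (u 0) (u 3)) / (m ^ 2 + m + 1) := by
  have hpow {a b : ℕ} : a ≠ b → m ^ a ≠ m ^ b := pow_ne_pow_of_abs_ne_one hm0 hm1
  have hsub_one : m - 1 ≠ 0 := by simpa [sub_eq_zero] using hpow one_ne_zero
  have hone_sub_sq : 1 - m ^ 2 ≠ 0 := by simpa [sub_eq_zero] using hpow two_ne_zero.symm
  have hcube_sub_one : m ^ 3 - 1 ≠ 0 := by simpa [sub_eq_zero] using hpow three_ne_zero
  have hquad : m * (m + 1) + 1 ≠ 0 := by
    rw [mul_add_one, ← sq]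
    exact (sq_add_self_add_one_pos m).ne'
  have hparam (j : Fin 6) :
      μ j = (y - m ^ (cutPairs j).1) / (m ^ (cutPairs j).2 - m ^ (cutPairs j).1) :=
    eq_sub_div_sub_of_lineMap_eq (hpow (cutPairs_fst_ne_snd j)) (hμ j)
  rw [shoelace_cutHexagon hu]
  simp only [hparam, cutPairs, Matrix.cons_val]
  -- `y` cancels separately in the coefficient of each `det2 (u 0) (u k)`
  field_simp
  ring

/-- The point of argument `i φ` on the circle of radius `r` around the origin: the central
projection of the `i`-th spiral vertex to the horizontal plane of `V 0`. -/
noncomputable def circlePoint (r φ : ℝ) (i : ℕ) : ℝ × ℝ := (r * cos (i * φ), r * sin (i * φ))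

lemma det2_circlePoint (r φ : ℝ) (i j : ℕ) :
    det2 (circlePoint r φ i) (circlePoint r φ j) = r ^ 2 * sin ((j - i) * φ) := by
  rw [circlePoint, circlePoint, det2_polar, sq, sub_mul]

lemma det2_circlePoint_succ_succ (r φ : ℝ) (i j : ℕ) :
    det2 (circlePoint r φ (i + 1)) (circlePoint r φ (j + 1)) =
      det2 (circlePoint r φ i) (circlePoint r φ j) := by
  simp only [det2_circlePoint, Nat.cast_add, add_sub_add_right_eq_sub]

lemma two_mul_sin_sub_sin_two_mul (x : ℝ) : 2 * sin x - sin (2 * x) = 2 * sin x * (1 - cos x) := by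
  rw [sin_two_mul]
  ring

lemma sin_sub_two_mul_sin_two_mul_add_sin_three_mul (x : ℝ) :
    sin x - 2 * sin (2 * x) + sin (3 * x) = -(2 * cos x) * (2 * sin x * (1 - cos x)) := by
  rw [sin_two_mul, sin_three_mul]
  linear_combination -4 * sin x * sin_sq_add_cos_sq x

lemma shoelace_cutHexagon_circlePoint {r φ m y : ℝ} {μ : Fin 6 → ℝ}
    (hm0 : m ≠ 0) (hm1 : |m| ≠ 1)
    (hμ : ∀ j, lineMap (m ^ (cutPairs j).1) (m ^ (cutPairs j).2) (μ j) = y) :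
    shoelace (cutHexagon (circlePoint r φ) μ) =
      2 * r ^ 2 * sin φ * (1 - cos φ) * (m ^ 2 - 2 * cos φ * m + 1) / (m ^ 2 + m + 1) := by
  rw [shoelace_cutHexagon_of_geometric (det2_circlePoint_succ_succ r φ) hm0 hm1 hμ]
  simp only [det2_circlePoint, Nat.cast_zero, Nat.cast_one, Nat.cast_ofNat, sub_zero, one_mul]
  congr 1
  linear_combination (m ^ 2 + 1) * r ^ 2 * two_mul_sin_sub_sin_two_mul φ +
    m * r ^ 2 * sin_sub_two_mul_sin_two_mul_add_sin_three_mul φ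

lemma exists_cutHexagon_smul_eq_smul_cutHexagon (u : ℕ → ℝ × ℝ) {x : ℕ → ℝ} {t : Fin 6 → ℝ} {z : ℝ}
    (hx : ∀ i, x i ≠ 0) (hz : z ≠ 0)
    (ht : ∀ j, lineMap (x (cutPairs j).1) (x (cutPairs j).2) (t j) = z) :
    ∃ μ : Fin 6 → ℝ, (∀ j, lineMap (x (cutPairs j).1)⁻¹ (x (cutPairs j).2)⁻¹ (μ j) = z⁻¹) ∧
      cutHexagon (fun i ↦ x i • u i) t = z • cutHexagon u μ := by
  have hne (j : Fin 6) : lineMap (x (cutPairs j).1) (x (cutPairs j).2) (t j) ≠ 0 :=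
    (ht j).trans_ne hz
  refine ⟨fun j ↦ t j * x (cutPairs j).2 / z, fun j ↦ ?_, funext fun j ↦ ?_⟩
  · simpa only [ht j] using lineMap_inv_inv (hx _) (hx _) (hne j)
  · simpa only [ht j, cutHexagon, Pi.smul_apply] using
      lineMap_smul_smul (u (cutPairs j).1) (u (cutPairs j).2) (hne j)

lemma shoelace_cutHexagon_pow_smul_circlePoint {r p φ z : ℝ} {t : Fin 6 → ℝ}
    (hp0 : p ≠ 0) (hp1 : |p| ≠ 1) (hz : z ≠ 0)
    (ht : ∀ j, lineMap (p ^ (cutPairs j).1) (p ^ (cutPairs j).2) (t j) = z) :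
    shoelace (cutHexagon (fun i ↦ p ^ i • circlePoint r φ i) t) =
      z ^ 2 * (2 * r ^ 2 * sin φ * (1 - cos φ) * (p ^ 2 - 2 * cos φ * p + 1) /
        (p ^ 2 + p + 1)) := by
  obtain ⟨μ, hμ, hcut⟩ := exists_cutHexagon_smul_eq_smul_cutHexagon (circlePoint r φ)
    (fun i ↦ pow_ne_zero i hp0) hz ht
  have hp1' : |p⁻¹| ≠ 1 := by rwa [abs_inv, Ne, inv_eq_one]
  simp only [← inv_pow] at hμ
  rw [hcut, shoelace_smul, shoelace_cutHexagon_circlePoint (inv_ne_zero hp0) hp1' hμ]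
  have hinv : p⁻¹ ^ 2 + p⁻¹ + 1 = (p ^ 2 + p + 1) / p ^ 2 := by field_simp; ring
  rw [hinv]
  field_simp
  ring

lemma one_sub_cos_mul_nonneg (p φ : ℝ) : 0 ≤ (1 - cos φ) * (p ^ 2 - 2 * cos φ * p + 1) := by
  have hsq : p ^ 2 - 2 * cos φ * p + 1 = (p - cos φ) ^ 2 + sin φ ^ 2 := by
    linear_combination -sin_sq_add_cos_sq φ
  rw [hsq]
  exact mul_nonneg (sub_nonneg.mpr (cos_le_one φ)) (by positivity)

theorem cross_section_area_ratio_n3_general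
    (r p q φ h : ℝ) (hp : |p| ≠ 1) (hh : h ≠ 0)
    (V : ℕ → ℝ × ℝ × ℝ)
    (hV : ∀ i : ℕ, V i = (r * p ^ i * cos (i * φ), r * p ^ i * sin (i * φ), -(r * p ^ i * q)))
    (t : Fin 6 → ℝ)
    (htz : ∀ j : Fin 6,
      (1 - t j) * (V (cutPairs j).1).2.2 + t j * (V (cutPairs j).2).2.2 = h)
    (E : Fin 6 → ℝ × ℝ)
    (hE : ∀ j : Fin 6, E j =
      ((1 - t j) * (V (cutPairs j).1).1 + t j * (V (cutPairs j).2).1,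
       (1 - t j) * (V (cutPairs j).1).2.1 + t j * (V (cutPairs j).2).2.1)) :
    1 / 2 * |∑ j : Fin 6, det2 (E j) (E (j + 1))| / h ^ 2 =
      |sin φ| * (cos φ - 1) * (2 * cos φ * p - p ^ 2 - 1) / ((p ^ 2 + p + 1) * q ^ 2) := by
  have hfactor : h = r * p * q * (-((1 - t 0) * p ^ 2 + t 0 * p ^ 3)) := by
    rw [← htz 0]
    simp only [hV, cutPairs, Matrix.cons_val]
    ring
  obtain ⟨⟨hr, hp0⟩, hq⟩ : (r ≠ 0 ∧ p ≠ 0) ∧ q ≠ 0 := by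
    have hrpq : r * p * q ≠ 0 := left_ne_zero_of_mul (hfactor ▸ hh)
    simpa only [mul_ne_zero_iff] using hrpq
  have ht (j : Fin 6) :
      lineMap (p ^ (cutPairs j).1) (p ^ (cutPairs j).2) (t j) = -h / (r * q) := by
    rw [eq_div_iff (mul_ne_zero hr hq), ← htz j, hV, hV, lineMap_apply_module]
    simp only [smul_eq_mul]
    ring
  have hEcut : E = cutHexagon (fun i ↦ p ^ i • circlePoint r φ i) t := by
    funext j
    rw [hE, hV, hV, cutHexagon, lineMap_apply_module]
    ext <;> simp only [circlePoint, Prod.fst_add, Prod.snd_add, Prod.smul_fst, Prod.smul_snd,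
      smul_eq_mul] <;> ring
  have hz : -h / (r * q) ≠ 0 := div_ne_zero (neg_ne_zero.mpr hh) (mul_ne_zero hr hq)
  have hshoelace : shoelace E =
      2 * h ^ 2 * ((1 - cos φ) * (p ^ 2 - 2 * cos φ * p + 1) / ((p ^ 2 + p + 1) * q ^ 2)) *
        sin φ := by
    rw [hEcut, shoelace_cutHexagon_pow_smul_circlePoint hp0 hp hz ht]
    field_simp
  have hnonneg :
      0 ≤ 2 * h ^ 2 * ((1 - cos φ) * (p ^ 2 - 2 * cos φ * p + 1) / ((p ^ 2 + p + 1) * q ^ 2)) := by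
    have hnum := one_sub_cos_mul_nonneg p φ
    have hden := sq_add_self_add_one_pos p
    positivity
  rw [← shoelace, hshoelace, abs_mul, abs_of_nonneg hnonneg]
  field_simp
  ring

lemma cutHeight_ne_zero {r p q α : ℝ} (hr : r ≠ 0) (hp0 : 0 < p) (hp1 : p ≤ 1) (hq : q ≠ 0)
    (hα1 : α ≤ 1) : -(r * p ^ 3 * q) * (α * p - α + 1) ≠ 0 := by
  have hpos : 0 < α * p - α + 1 :=
    calc 0 < p := hp0
      _ ≤ p + (1 - α) * (1 - p) :=
        le_add_of_nonneg_right (mul_nonneg (sub_nonneg.mpr hα1) (sub_nonneg.mpr hp1))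
      _ = α * p - α + 1 := by ring
  exact mul_ne_zero (neg_ne_zero.mpr (by positivity)) hpos.ne'

/-- Theorem 7 of the paper, case n = 3: the cross-sectional area divided by the
squared cut height is independent of the cut position α. -/
theorem cross_section_area_ratio_n3
    (r p q φ α c s h : ℝ)
    (hr : 0 < r) (hp0 : 0 < p) (hp1 : p < 1) (hq : q ≠ 0)
    (hφ0 : 0 < φ) (hφπ : φ < Real.pi)
    (hc : c = Real.cos φ) (hs : s = Real.sin φ)
    (hα0 : 0 ≤ α) (hα1 : α ≤ 1)
    (hh : h = -(r * p ^ 3 * q) * (α * p - α + 1))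
    (V : ℕ → ℝ × ℝ × ℝ)
    (hV : ∀ i : ℕ, V i =
      (r * p ^ i * Real.cos (i * φ), r * p ^ i * Real.sin (i * φ), -(r * p ^ i * q)))
    (t : Fin 6 → ℝ)
    -- each intersection point lies in the plane z = h
    (htz : ∀ j : Fin 6,
      (1 - t j) * (V (cutPairs j).1).2.2 + t j * (V (cutPairs j).2).2.2 = h)
    -- the parameter on the segment V₃V₄ is α
    (ht0 : t 0 = α)
    (E : Fin 6 → ℝ × ℝ)
    (hE : ∀ j : Fin 6, E j =
      ((1 - t j) * (V (cutPairs j).1).1 + t j * (V (cutPairs j).2).1,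
       (1 - t j) * (V (cutPairs j).1).2.1 + t j * (V (cutPairs j).2).2.1))
    (A : ℝ)
    (hA : A = 1 / 2 * |∑ j : Fin 6, det2 (E j) (E (j + 1))|) :
    A / h ^ 2 = s * (c - 1) * (2 * c * p - p ^ 2 - 1) / ((p ^ 2 + p + 1) * q ^ 2) := by
  rw [hA, hc, hs, ← abs_of_pos (sin_pos_of_pos_of_lt_pi hφ0 hφπ)]
  exact cross_section_area_ratio_n3_general r p q φ h ((abs_of_pos hp0).trans_ne hp1.ne)
    (hh ▸ cutHeight_ne_zero hr.ne' hp0 hp1.le hq hα1) V hV t htz E hE
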